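/- arXiv:1411.6363 — 3 statements merged into one kernel-verified Lean document; each statement's English description precedes it below -/
import Mathlib

section
/- Let n be a positive integer and let σ be a decorated permutation of order n, and set m = inv(σ) and k = (1/n)·∑_{i=1}^n (σ(i) − i) (an integer with 0 ≤ k ≤ n). Then there exist integers i₁, …, i_m such that, defining σ₀ = σ and σ_r = σ_{r−1} ∘ t_{i_r, i_r + 1} for 1 ≤ r ≤ m, one has σ_{r−1}(i_r) > σ_{r−1}(i_r + 1) for every 1 ≤ r ≤ m, and σ_m(i) = i + k for all i ∈ ℤ. In other words, σ is transformed into the top-cell permutation i ↦ i + k by a sequence of inv(σ) strictly adjacent inversion-removing transpositions. -/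
/-- A decorated permutation of order `n`: a bijection `σ : ℤ → ℤ` with
`σ (i + n) = σ i + n` and `i ≤ σ i ≤ i + n` for all `i`. -/
def IsDecoratedPerm (n : ℤ) (σ : ℤ → ℤ) : Prop :=
  Function.Bijective σ ∧ (∀ i : ℤ, σ (i + n) = σ i + n) ∧ ∀ i : ℤ, i ≤ σ i ∧ σ i ≤ i + n

/-- The affine transposition `t_{a,b}`: swaps `a + m*n` and `b + m*n` for every `m : ℤ`
and fixes all integers not congruent to `a` or `b` modulo `n`. -/
def affT (n a b : ℤ) (i : ℤ) : ℤ :=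
  if (i - a) % n = 0 then i + (b - a)
  else if (i - b) % n = 0 then i - (b - a)
  else i

/-- The inversion set `Inv(σ) = {(i, j) : 1 ≤ i ≤ n, i < j, σ i > σ j}`. -/
def InvSet (n : ℤ) (σ : ℤ → ℤ) : Set (ℤ × ℤ) :=
  {p : ℤ × ℤ | 1 ≤ p.1 ∧ p.1 ≤ n ∧ p.1 < p.2 ∧ σ p.2 < σ p.1}

/-!
Greedy bubble sort. Removing a strictly adjacent inversion `a` of `σ` lowers `inv σ` by exactly one
and keeps `∑ (σ i - i)` fixed: both sums have `n`-periodic terms, so they may be taken over the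
window `[a, a + n)`, on which `t_{a, a + 1}` is the plain swap of `a` and `a + 1`. A permutation
without adjacent inversions is strictly increasing, so its displacement `σ i - i` is monotone;
being also `n`-periodic, it is constant, and its average is `k`.
-/

section AffineTransposition

variable {n a b : ℤ}

theorem affT_add (n a b i : ℤ) : affT n a b (i + n) = affT n a b i + n := by
  simp only [affT, add_sub_right_comm i n, Int.add_emod_right]
  split_ifs <;> ring

theorem comp_affT_add {σ : ℤ → ℤ} (hper : ∀ i, σ (i + n) = σ i + n) (a b i : ℤ) :
    (σ ∘ affT n a b) (i + n) = (σ ∘ affT n a b) i + n := by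
  simp only [Function.comp_apply, affT_add, hper]

theorem affT_involutive (hab : ¬ n ∣ b - a) : Function.Involutive (affT n a b) := by
  intro i
  by_cases hia : n ∣ i - a
  · have hib : ¬ n ∣ i + (b - a) - a := by
      rwa [add_sub_right_comm, dvd_add_right hia]
    have hib' : n ∣ i + (b - a) - b := by
      rwa [show i + (b - a) - b = i - a by ring]
    simp [affT, hia, hib, hib']
  · by_cases hib : n ∣ i - b
    · have hia' : n ∣ i - (b - a) - a := by
        rwa [show i - (b - a) - a = i - b by ring]
      simp [affT, hia, hib, hia']
    · simp [affT, hia, hib]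

theorem affT_left (n a b : ℤ) : affT n a b a = b := by
  simp [affT]

theorem affT_right (hab : ¬ n ∣ b - a) : affT n a b b = a := by
  simpa only [affT_left] using affT_involutive hab a

theorem eq_of_dvd_sub_of_mem_Ico {i j : ℤ} (hi : i ∈ Set.Ico a (a + n))
    (hj : j ∈ Set.Ico a (a + n)) (h : n ∣ i - j) : i = j := by
  rw [Set.mem_Ico] at hi hj
  exact sub_eq_zero.mp (Int.eq_zero_of_abs_lt_dvd h (abs_lt.mpr (by omega)))

theorem affT_eq_swap (hb : b ∈ Set.Ico a (a + n)) {i : ℤ} (hi : i ∈ Set.Ico a (a + n)) :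
    affT n a b i = Equiv.swap a b i := by
  have emod_eq_zero_iff : ∀ c ∈ Set.Ico a (a + n), (i - c) % n = 0 ↔ i = c := by
    intro c hc
    rw [← Int.dvd_iff_emod_eq_zero]
    exact ⟨eq_of_dvd_sub_of_mem_Ico hi hc, by rintro rfl; simp⟩
  have ha : a ∈ Set.Ico a (a + n) := ⟨le_rfl, hb.1.trans_lt hb.2⟩
  simp only [affT, emod_eq_zero_iff a ha, emod_eq_zero_iff b hb, Equiv.swap_apply_def]
  split_ifs <;> omega

theorem sum_Ico_comp_affT {M : Type*} [AddCommMonoid M] (hb : b ∈ Set.Ico a (a + n)) (g : ℤ → M) :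
    ∑ i ∈ Finset.Ico a (a + n), g (affT n a b i) = ∑ i ∈ Finset.Ico a (a + n), g i := by
  have hsupp : {i | Equiv.swap a b i ≠ i} ⊆ Finset.Ico a (a + n) := by
    intro i hi
    rcases (Equiv.swap_apply_ne_self_iff.mp hi).2 with rfl | rfl
    · simpa using hb.1.trans_lt hb.2
    · simpa using hb
  rw [← Equiv.Perm.sum_comp _ _ g hsupp]
  exact Finset.sum_congr rfl fun i hi ↦ by rw [affT_eq_swap hb (Finset.mem_Ico.mp hi)]

theorem not_dvd_add_one_sub_self (hn : 2 ≤ n) : ¬ n ∣ a + 1 - a := by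
  rw [add_sub_cancel_left]
  exact fun h ↦ absurd (Int.le_of_dvd one_pos h) (by omega)

theorem affT_lt_affT (hn : 2 ≤ n) {i j : ℤ} (hij : i < j) (hne : n ∣ i - a → j ≠ i + 1) :
    affT n a (a + 1) i < affT n a (a + 1) j := by
  refine lt_of_le_of_ne ?_
    ((affT_involutive (not_dvd_add_one_sub_self hn)).injective.ne hij.ne)
  rw [Int.dvd_iff_emod_eq_zero] at hne
  unfold affT
  split_ifs <;> omega

end AffineTransposition

section Periodic

variable {n : ℤ}

theorem sum_Icc_one_eq_sum_Ico_of_periodic {M : Type*} [AddCommMonoid M] {g : ℤ → M}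
    (hg : Function.Periodic g n) (a : ℤ) :
    ∑ i ∈ Finset.Icc 1 n, g i = ∑ i ∈ Finset.Ico a (a + n), g i := by
  have hwindow : Function.Periodic (fun b ↦ ∑ i ∈ Finset.Ico b (b + n), g i) 1 := by
    intro b
    rcases le_or_gt n 0 with hn | hn
    · simp [hn]
    · calc ∑ i ∈ Finset.Ico (b + 1) (b + 1 + n), g i
          = (∑ i ∈ Finset.Ico (b + 1) (b + n), g i) + g (b + n) := by
            rw [Finset.sum_Ico_add_eq_sum_Ico_add_one (by omega), add_right_comm]
        _ = g b + ∑ i ∈ Finset.Ico (b + 1) (b + n), g i := by rw [hg, add_comm]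
        _ = ∑ i ∈ Finset.Ico b (b + n), g i := by
            rw [← Finset.insert_Ico_add_one_left_eq_Ico (by omega : b < b + n),
              Finset.sum_insert (by simp)]
  have hIcc : Finset.Icc 1 n = Finset.Ico 1 (1 + n) := by
    ext i
    simp only [Finset.mem_Icc, Finset.mem_Ico]
    omega
  rw [hIcc, ← mul_one a]
  exact (hwindow.int_mul_eq 1).trans (hwindow.int_mul_eq a).symm

theorem eq_of_monotone_of_periodic {α β : Type*} [AddCommGroup α] [LinearOrder α]
    [IsOrderedAddMonoid α] [Archimedean α] [PartialOrder β] {c : α} {f : α → β}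
    (hf : Monotone f) (hper : Function.Periodic f c) (hc : 0 < c) (i j : α) : f i = f j := by
  have hle (i j : α) : f i ≤ f j := by
    obtain ⟨l, hl, hjl⟩ := hper.exists_mem_Ico hc j i
    exact hjl ▸ hf hl.1
  exact (hle i j).antisymm (hle j i)

end Periodic

/-- The positions `j` that form an inversion `(i, j)` of `σ`. The cardinality of the `i`-th row is
`n`-periodic in `i`, so `inv σ` can be counted over any window of length `n`. -/
def invRow (σ : ℤ → ℤ) (i : ℤ) : Set ℤ :=
  {j | i < j ∧ σ j < σ i}

section Inversions

variable {n a : ℤ} {σ : ℤ → ℤ}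

theorem periodic_sub_self (hper : ∀ i, σ (i + n) = σ i + n) :
    Function.Periodic (fun i ↦ σ i - i) n := by
  intro i
  simp only [hper, add_sub_add_right_eq_sub]

theorem invRow_finite (hn : 0 < n) (hper : ∀ i, σ (i + n) = σ i + n) (i : ℤ) :
    (invRow σ i).Finite := by
  obtain ⟨c, hc⟩ := ((Set.finite_Ico 0 n).image fun i ↦ σ i - i).bddBelow
  have hbound (j : ℤ) : c ≤ σ j - j := by
    obtain ⟨l, hl, hjl⟩ := (periodic_sub_self hper).exists_mem_Ico₀ hn j
    exact hjl ▸ hc ⟨l, hl, rfl⟩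
  refine (Set.finite_Icc i (σ i - c)).subset fun j ⟨hij, hσ⟩ ↦ ⟨hij.le, ?_⟩
  linarith [hbound j]

theorem periodic_ncard_invRow (hper : ∀ i, σ (i + n) = σ i + n) :
    Function.Periodic (fun i ↦ (invRow σ i).ncard) n := by
  intro i
  have hshift : (· + n) ⁻¹' invRow σ (i + n) = invRow σ i := by
    ext j
    simp [invRow, hper]
  beta_reduce
  rw [← hshift, Set.ncard_preimage_of_injective_subset_range (add_left_injective n)
    fun j _ ↦ ⟨j - n, sub_add_cancel j n⟩]

theorem ncard_invSet_eq_sum_Icc (hrow : ∀ i, (invRow σ i).Finite) :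
    (InvSet n σ).ncard = ∑ i ∈ Finset.Icc 1 n, (invRow σ i).ncard := by
  have hunion : InvSet n σ = ⋃ i ∈ Set.Icc 1 n, Prod.mk i '' invRow σ i := by
    ext ⟨i, j⟩
    simp only [InvSet, invRow, Set.mem_ofPred_eq, Set.mem_iUnion, Set.mem_image, Set.mem_Icc]
    grind
  have hdisjoint : (Set.Icc 1 n).PairwiseDisjoint fun i ↦ Prod.mk i '' invRow σ i := by
    intro i _ j _ hij
    simp only [Function.onFun, Set.disjoint_left]
    rintro _ ⟨_, _, rfl⟩ ⟨_, _, h⟩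
    exact hij (congrArg Prod.fst h).symm
  rw [hunion, (Set.finite_Icc 1 n).ncard_biUnion (fun i _ ↦ (hrow i).image _) hdisjoint,
    ← Finset.coe_Icc, finsum_mem_coe_finset]
  exact Finset.sum_congr rfl fun i _ ↦
    Set.ncard_image_of_injective _ (Prod.mk_right_injective i)

theorem ncard_invSet_eq_sum_Ico (hn : 0 < n) (hper : ∀ i, σ (i + n) = σ i + n) (a : ℤ) :
    (InvSet n σ).ncard = ∑ i ∈ Finset.Ico a (a + n), (invRow σ i).ncard := by
  rw [ncard_invSet_eq_sum_Icc (invRow_finite hn hper),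
    sum_Icc_one_eq_sum_Ico_of_periodic (periodic_ncard_invRow hper) a]

theorem exists_apply_add_one_lt (h : (InvSet n σ).Nonempty) : ∃ a, σ (a + 1) < σ a := by
  by_contra! hle
  obtain ⟨⟨i, j⟩, -, -, hij, hσ⟩ := h
  exact hσ.not_ge (monotone_int_of_le_succ hle hij.le)

theorem two_le_of_apply_add_one_lt (hn : 0 < n) (hper : ∀ i, σ (i + n) = σ i + n)
    (ha : σ (a + 1) < σ a) : 2 ≤ n := by
  by_contra! hlt
  obtain rfl : n = 1 := by omega
  linarith [hper a]

end Inversions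

section AdjacentInversion

variable {n a i : ℤ} {σ : ℤ → ℤ}

theorem preimage_affT_invRow (hn : 2 ≤ n) (ha : σ (a + 1) < σ a)
    (hi : i ∈ Set.Ico a (a + n)) (hne : i ≠ a + 1) :
    affT n a (a + 1) ⁻¹' invRow σ (affT n a (a + 1) i) = invRow (σ ∘ affT n a (a + 1)) i := by
  have hleft : a ∈ Set.Ico a (a + n) := ⟨le_rfl, by omega⟩
  have hright : a + 1 ∈ Set.Ico a (a + n) := ⟨by omega, by omega⟩
  ext j
  refine and_congr_left fun hσ ↦ ⟨fun hlt ↦ ?_, fun hij ↦ affT_lt_affT hn hij ?_⟩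
  · by_contra! hji
    rcases hji.eq_or_lt with rfl | hji
    · exact hlt.false
    · refine hlt.not_gt (affT_lt_affT hn hji ?_)
      rintro hdvd rfl
      exact hne (eq_of_dvd_sub_of_mem_Ico hi hright (by rwa [add_sub_add_right_eq_sub]))
  · rintro hdvd rfl
    obtain rfl := eq_of_dvd_sub_of_mem_Ico hi hleft hdvd
    rw [affT_left, affT_right (not_dvd_add_one_sub_self hn)] at hσ
    exact hσ.not_gt ha

theorem preimage_affT_invRow_left (hn : 2 ≤ n) (ha : σ (a + 1) < σ a) :
    affT n a (a + 1) ⁻¹' invRow σ a = insert a (invRow (σ ∘ affT n a (a + 1)) (a + 1)) := by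
  have hright := affT_right (not_dvd_add_one_sub_self (a := a) hn)
  ext j
  rcases lt_trichotomy j a with hja | rfl | hja
  · have hlt := affT_lt_affT (a := a) hn (hja.trans (lt_add_one a)) (by omega)
    rw [hright] at hlt
    simp only [invRow, Set.mem_preimage, Set.mem_insert_iff, Set.mem_ofPred_eq]
    omega
  · simp [invRow, affT_left, ha]
  · rcases (Int.add_one_le_of_lt hja).eq_or_lt with rfl | hja'
    · simp [invRow, hright]
    · have hlt := affT_lt_affT hn hja' fun h ↦ (not_dvd_add_one_sub_self hn h).elim
      rw [hright] at hlt
      simp [invRow, hright, hlt, hja', hja.ne']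

theorem ncard_invRow_affT (hn : 0 < n) (hper : ∀ i, σ (i + n) = σ i + n)
    (ha : σ (a + 1) < σ a) (hi : i ∈ Set.Ico a (a + n)) :
    (invRow σ (affT n a (a + 1) i)).ncard =
      (invRow (σ ∘ affT n a (a + 1)) i).ncard + if i = a + 1 then 1 else 0 := by
  have hn2 := two_le_of_apply_add_one_lt hn hper ha
  have hbij := (affT_involutive (not_dvd_add_one_sub_self (a := a) hn2)).bijective
  rw [← Set.ncard_preimage_of_injective_subset_range hbij.injective
    (hbij.surjective.range_eq ▸ Set.subset_univ _)]
  split_ifs with hia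
  · subst hia
    rw [affT_right (not_dvd_add_one_sub_self hn2), preimage_affT_invRow_left hn2 ha,
      Set.ncard_insert_of_notMem (fun h ↦ (lt_add_one a).not_gt h.1)
        (invRow_finite hn (comp_affT_add hper a (a + 1)) _)]
  · rw [preimage_affT_invRow hn2 ha hi hia, add_zero]

theorem ncard_invSet_comp_affT_add_one (hn : 0 < n) (hper : ∀ i, σ (i + n) = σ i + n)
    (ha : σ (a + 1) < σ a) :
    (InvSet n (σ ∘ affT n a (a + 1))).ncard + 1 = (InvSet n σ).ncard := by
  have hn2 := two_le_of_apply_add_one_lt hn hper ha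
  have hright : a + 1 ∈ Set.Ico a (a + n) := ⟨by omega, by omega⟩
  symm
  calc (InvSet n σ).ncard
      = ∑ i ∈ Finset.Ico a (a + n), (invRow σ (affT n a (a + 1) i)).ncard := by
        rw [ncard_invSet_eq_sum_Ico hn hper a,
          sum_Ico_comp_affT hright fun i ↦ (invRow σ i).ncard]
    _ = ∑ i ∈ Finset.Ico a (a + n),
          ((invRow (σ ∘ affT n a (a + 1)) i).ncard + if i = a + 1 then 1 else 0) :=
        Finset.sum_congr rfl fun i hi ↦ ncard_invRow_affT hn hper ha (Finset.mem_Ico.mp hi)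
    _ = (InvSet n (σ ∘ affT n a (a + 1))).ncard + 1 := by
        rw [Finset.sum_add_distrib, Finset.sum_ite_eq', if_pos (Finset.mem_Ico.mpr hright),
          ncard_invSet_eq_sum_Ico hn (comp_affT_add hper a (a + 1)) a]

theorem strictMono_of_ncard_invSet_eq_zero (hn : 0 < n) (hinj : Function.Injective σ)
    (hper : ∀ i, σ (i + n) = σ i + n) (h : (InvSet n σ).ncard = 0) : StrictMono σ := by
  refine strictMono_int_of_lt_succ fun a ↦ lt_of_not_ge fun hle ↦ ?_
  have ha : σ (a + 1) < σ a := hle.lt_of_ne (hinj.ne (by omega))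
  have := ncard_invSet_comp_affT_add_one hn hper ha
  omega

end AdjacentInversion

/-- Affine permutations of order `n` with average displacement `k`, that is, the `k`-th component
of the extended affine symmetric group; no bound is put on the individual displacements
`σ i - i`. The average is encoded division-free, as a sum over one period equal to `n * k`. -/
structure IsAffinePerm (n k : ℤ) (σ : ℤ → ℤ) : Prop where
  bijective : Function.Bijective σ
  map_add : ∀ i, σ (i + n) = σ i + n
  sum_sub_self : ∑ i ∈ Finset.Icc 1 n, (σ i - i) = n * k

namespace IsAffinePerm

variable {n k a b : ℤ} {σ : ℤ → ℤ}

theorem comp_affT (hσ : IsAffinePerm n k σ) (hb : b ∈ Set.Ioo a (a + n)) :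
    IsAffinePerm n k (σ ∘ affT n a b) where
  bijective := by
    have hab : ¬ n ∣ b - a := fun h ↦
      absurd (Int.le_of_dvd (sub_pos.mpr hb.1) h) (by linarith [hb.2])
    exact hσ.bijective.comp (affT_involutive hab).bijective
  map_add := comp_affT_add hσ.map_add a b
  sum_sub_self := by
    rw [sum_Icc_one_eq_sum_Ico_of_periodic (periodic_sub_self
      (comp_affT_add hσ.map_add a b)) a, Finset.sum_sub_distrib]
    simp only [Function.comp_apply]
    rw [sum_Ico_comp_affT (Set.Ioo_subset_Ico_self hb) σ, ← Finset.sum_sub_distrib,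
      ← sum_Icc_one_eq_sum_Ico_of_periodic (periodic_sub_self hσ.map_add) a, hσ.sum_sub_self]

theorem comp_affT_of_lt (hn : 0 < n) (hσ : IsAffinePerm n k σ) (ha : σ (a + 1) < σ a) :
    IsAffinePerm n k (σ ∘ affT n a (a + 1)) := by
  have hn2 := two_le_of_apply_add_one_lt hn hσ.map_add ha
  exact hσ.comp_affT ⟨by omega, by omega⟩

theorem eq_add_of_strictMono (hn : 0 < n) (hσ : IsAffinePerm n k σ) (hmono : StrictMono σ)
    (i : ℤ) : σ i = i + k := by
  have hdisp : Monotone fun i ↦ σ i - i :=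
    monotone_int_of_le_succ fun i ↦ by linarith [Int.add_one_le_of_lt (hmono (lt_add_one i))]
  have hconst (j : ℤ) : σ j - j = σ i - i :=
    eq_of_monotone_of_periodic hdisp (periodic_sub_self hσ.map_add) hn j i
  have hsum : n * (σ i - i) = n * k := by
    simpa only [hconst, Finset.sum_const, Int.card_Icc, add_sub_cancel_right, nsmul_eq_mul,
      Int.toNat_of_nonneg hn.le] using hσ.sum_sub_self
  linarith [mul_left_cancel₀ hn.ne' hsum]

end IsAffinePerm

theorem reach_top_cell_by_adjacent_transpositions_general (n : ℤ) (hn : 0 < n) (k : ℤ)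
    (σ : ℤ → ℤ) (hσ : IsAffinePerm n k σ) (m : ℕ) (hm : m = (InvSet n σ).ncard) :
    ∃ f : ℕ → ℤ, ∃ τ : ℕ → ℤ → ℤ,
      τ 0 = σ ∧
      (∀ r : ℕ, 1 ≤ r → r ≤ m → τ r = τ (r - 1) ∘ affT n (f r) (f r + 1)) ∧
      (∀ r : ℕ, 1 ≤ r → r ≤ m → τ (r - 1) (f r + 1) < τ (r - 1) (f r)) ∧
      (∀ i : ℤ, τ m i = i + k) := by
  choose! a ha using fun ρ : ℤ → ℤ ↦ exists_apply_add_one_lt (n := n) (σ := ρ)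
  let τ (r : ℕ) : ℤ → ℤ := (fun ρ ↦ ρ ∘ affT n (a ρ) (a ρ + 1))^[r] σ
  have hsucc (r : ℕ) : τ (r + 1) = τ r ∘ affT n (a (τ r)) (a (τ r) + 1) :=
    Function.iterate_succ_apply' _ r σ
  have hdesc {r : ℕ} (hpos : 0 < (InvSet n (τ r)).ncard) :
      τ r (a (τ r) + 1) < τ r (a (τ r)) :=
    ha _ (Set.nonempty_of_ncard_ne_zero hpos.ne')
  have hinv (r : ℕ) (hr : r ≤ m) :
      IsAffinePerm n k (τ r) ∧ (InvSet n (τ r)).ncard + r = m := by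
    induction r with
    | zero => exact ⟨hσ, hm.symm⟩
    | succ r ih =>
      obtain ⟨haff, hcard⟩ := ih (by omega)
      have hlt := hdesc (r := r) (by omega)
      have hcard' := ncard_invSet_comp_affT_add_one hn haff.map_add hlt
      rw [hsucc]
      exact ⟨haff.comp_affT_of_lt hn hlt, by omega⟩
  refine ⟨fun r ↦ a (τ (r - 1)), τ, rfl, fun r hr _ ↦ ?_, fun r hr hrm ↦ ?_, ?_⟩
  · obtain ⟨r, rfl⟩ := Nat.exists_eq_add_of_le' hr
    exact hsucc r
  · exact hdesc (by have := (hinv (r - 1) (by omega)).2; omega)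
  · obtain ⟨haff, hcard⟩ := hinv m le_rfl
    exact haff.eq_add_of_strictMono hn <|
      strictMono_of_ncard_invSet_eq_zero hn haff.bijective.injective haff.map_add (by omega)

/-- With `m = inv σ` and `k = (1/n) ∑_{i=1}^n (σ i - i)`, the permutation
`σ` can be taken to the top-cell permutation `i ↦ i + k` by a sequence of `m` strictly
adjacent inversion-removing transpositions. -/
theorem reach_top_cell_by_adjacent_transpositions (n : ℤ) (hn : 0 < n) (σ : ℤ → ℤ)
    (hσ : IsDecoratedPerm n σ) (m : ℕ) (hm : m = (InvSet n σ).ncard)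
    (k : ℤ) (hk : n * k = ∑ i ∈ Finset.Icc (1 : ℤ) n, (σ i - i)) :
    ∃ f : ℕ → ℤ, ∃ τ : ℕ → ℤ → ℤ,
      τ 0 = σ ∧
      (∀ r : ℕ, 1 ≤ r → r ≤ m → τ r = τ (r - 1) ∘ affT n (f r) (f r + 1)) ∧
      (∀ r : ℕ, 1 ≤ r → r ≤ m → τ (r - 1) (f r + 1) < τ (r - 1) (f r)) ∧
      (∀ i : ℤ, τ m i = i + k) :=
  reach_top_cell_by_adjacent_transpositions_general n hn k σ ⟨hσ.1, hσ.2.1, hk.symm⟩ m hm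
end

section
/- Let U = {(x, y, z) ∈ ℝ³ : x > 0, y > 0, z > 0} and define F : U → ℝ³ by F(x, y, z) = (y·z/(x + z), x + z, x·y/(x + z)). Then for every (x, y, z) ∈ U, the Jacobian determinant of F at (x, y, z) equals y/(x + z) = +F₁(x,y,z)·F₂(x,y,z)·F₃(x,y,z)/(x·y·z). Consequently the change of variables (α_j, α_{j+1}, α_{j+2}) ↦ (β_j, β_{j+1}, β_{j+2}) = (α_{j+1}α_{j+2}/(α_j + α_{j+2}), α_j + α_{j+2}, α_j α_{j+1}/(α_j + α_{j+2})) arising from the square move satisfies dlog β_{j+2} ∧ dlog β_{j+1} ∧ dlog β_j = + dlog α_{j+2} ∧ dlog α_{j+1} ∧ dlog α_j, so the two BCFW reference charts related by this substitution have the same orientation. -/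
/-! The outer two components of the square move add up to `y`, so adding the first row of its
Jacobian matrix to the third turns the latter into `(0, 1, 0)`, and the determinant collapses to
`(yz + xy) / (x + z)² = y / (x + z)`. -/

section TripleProduct

/-- The coordinates of the iterated product `R × R × R`, through which `3 × 3` matrices act on
it; the analogue of `LinearEquiv.finTwoArrow`. -/
@[simps]
def finThreeArrow (R : Type*) [Semiring R] : (Fin 3 → R) ≃ₗ[R] R × R × R where
  toFun v := (v 0, v 1, v 2)
  invFun p := ![p.1, p.2.1, p.2.2]
  map_add' _ _ := rfl
  map_smul' _ _ := rfl
  left_inv v := by ext i; fin_cases i <;> rfl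
  right_inv _ := rfl

variable {R : Type*} [CommSemiring R]

theorem finThreeArrow_conj_toLin'_apply (A : Matrix (Fin 3) (Fin 3) R) (p : R × R × R) :
    (finThreeArrow R).conj (Matrix.toLin' A) p =
      (A 0 0 * p.1 + A 0 1 * p.2.1 + A 0 2 * p.2.2,
        A 1 0 * p.1 + A 1 1 * p.2.1 + A 1 2 * p.2.2,
        A 2 0 * p.1 + A 2 1 * p.2.1 + A 2 2 * p.2.2) := by
  simp [LinearEquiv.conj_apply, Matrix.mulVec, dotProduct, Fin.sum_univ_three]

variable [TopologicalSpace R] [IsTopologicalSemiring R]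

/-- The continuous endomorphism of `R × R × R` with matrix `A` in the standard coordinates, used to
write Fréchet derivatives as Jacobian matrices. Unlike `LinearMap.toContinuousLinearMap`, it does
not ask for `R` to be complete. -/
def tripleCLM (A : Matrix (Fin 3) (Fin 3) R) : R × R × R →L[R] R × R × R where
  toLinearMap := (finThreeArrow R).conj (Matrix.toLin' A)
  cont := (continuous_congr (finThreeArrow_conj_toLin'_apply A)).2 (by fun_prop)

theorem tripleCLM_apply (A : Matrix (Fin 3) (Fin 3) R) (p : R × R × R) :
    tripleCLM A p =
      (A 0 0 * p.1 + A 0 1 * p.2.1 + A 0 2 * p.2.2,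
        A 1 0 * p.1 + A 1 1 * p.2.1 + A 1 2 * p.2.2,
        A 2 0 * p.1 + A 2 1 * p.2.1 + A 2 2 * p.2.2) :=
  finThreeArrow_conj_toLin'_apply A p

theorem det_tripleCLM {R : Type*} [CommRing R] [TopologicalSpace R] [IsTopologicalSemiring R]
    (A : Matrix (Fin 3) (Fin 3) R) : (tripleCLM A).det = A.det :=
  (LinearMap.det_conj _ (finThreeArrow R)).trans (LinearMap.det_toLin' A)

end TripleProduct

theorem hasFDerivAt_fun_div {𝕜 E : Type*} [NontriviallyNormedField 𝕜] [NormedAddCommGroup E]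
    [NormedSpace 𝕜 E] {f g : E → 𝕜} {f' g' : E →L[𝕜] 𝕜} {p : E} (hf : HasFDerivAt f f' p)
    (hg : HasFDerivAt g g' p) (hp : g p ≠ 0) :
    HasFDerivAt (fun q ↦ f q / g q) ((g p ^ 2)⁻¹ • (g p • f' - f p • g')) p := by
  have hinv : HasFDerivAt (fun q ↦ (g q)⁻¹) (-(g p ^ 2)⁻¹ • g') p :=
    (hasDerivAt_inv hp).comp_hasFDerivAt p hg
  simp only [div_eq_mul_inv]
  refine (hf.fun_mul hinv).congr_fderiv ?_
  ext v
  simp only [add_apply, sub_apply, smul_apply, smul_eq_mul]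
  field_simp
  ring

section SquareMove

variable {K : Type*} [Field K]

/-- The substitution `(α_j, α_{j+1}, α_{j+2}) ↦ (β_j, β_{j+1}, β_{j+2})` induced by the square
move, over an arbitrary field; where `α_j + α_{j+2} = 0`, the quotients take the junk value `0`. -/
def squareMove (p : K × K × K) : K × K × K :=
  (p.2.1 * p.2.2 / (p.1 + p.2.2), p.1 + p.2.2, p.1 * p.2.1 / (p.1 + p.2.2))

/-- The Jacobian matrix of `squareMove` at `(x, y, z)`, with one row per component of the map. -/
def squareMoveJacobian (x y z : K) : Matrix (Fin 3) (Fin 3) K :=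
  !![-(y * z) / (x + z) ^ 2, z / (x + z), x * y / (x + z) ^ 2;
     1, 0, 1;
     y * z / (x + z) ^ 2, x / (x + z), -(x * y) / (x + z) ^ 2]

theorem det_squareMoveJacobian {x z : K} (y : K) (hxz : x + z ≠ 0) :
    (squareMoveJacobian x y z).det = y / (x + z) := by
  set J := squareMoveJacobian x y z with hJ
  have hrow : J.updateRow 2 (J 2 + J 0) =
      !![-(y * z) / (x + z) ^ 2, z / (x + z), x * y / (x + z) ^ 2;
         1, 0, 1;
         0, 1, 0] := by
    ext i j
    fin_cases i <;> fin_cases j <;> simp [hJ, squareMoveJacobian] <;> field_simp <;> ring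
  calc
    J.det = (J.updateRow 2 (J 2 + J 0)).det :=
      (Matrix.det_updateRow_add_self J (by decide)).symm
    _ = (y * z + x * y) / (x + z) ^ 2 := by
      simp [hrow, Matrix.det_fin_three]
      ring
    _ = y / (x + z) := by
      field_simp
      ring

theorem prod_squareMove (x y z : K) :
    (squareMove (x, y, z)).1 * (squareMove (x, y, z)).2.1 * (squareMove (x, y, z)).2.2 =
      y / (x + z) * (x * y * z) := by
  simp only [squareMove]
  field_simp

variable {𝕜 : Type*} [NontriviallyNormedField 𝕜] {x z : 𝕜}

theorem hasFDerivAt_squareMove (y : 𝕜) (hxz : x + z ≠ 0) :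
    HasFDerivAt squareMove (tripleCLM (squareMoveJacobian x y z)) (x, y, z) := by
  have hfst : HasFDerivAt (fun p : 𝕜 × 𝕜 × 𝕜 ↦ p.1) (.fst 𝕜 𝕜 (𝕜 × 𝕜)) (x, y, z) :=
    hasFDerivAt_fst
  have hsnd : HasFDerivAt (fun p : 𝕜 × 𝕜 × 𝕜 ↦ p.2) (.snd 𝕜 𝕜 (𝕜 × 𝕜)) (x, y, z) :=
    hasFDerivAt_snd
  have hmid := hsnd.fst
  have hlast := hsnd.snd
  have hsum := hfst.fun_add hlast
  refine ((hasFDerivAt_fun_div (hmid.fun_mul hlast) hsum hxz).prodMk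
    (hsum.prodMk (hasFDerivAt_fun_div (hfst.fun_mul hmid) hsum hxz))).congr_fderiv ?_
  refine ContinuousLinearMap.ext fun v ↦ Prod.ext ?_ (Prod.ext ?_ ?_) <;>
    simp [tripleCLM_apply, squareMoveJacobian] <;> field_simp <;> ring

theorem det_fderiv_squareMove (y : 𝕜) (hxz : x + z ≠ 0) :
    (fderiv 𝕜 squareMove (x, y, z)).det = y / (x + z) := by
  rw [(hasFDerivAt_squareMove y hxz).fderiv, det_tripleCLM, det_squareMoveJacobian y hxz]

theorem jacobian_case_iv_general {y : 𝕜} (hx : x ≠ 0) (hy : y ≠ 0) (hz : z ≠ 0)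
    (hxz : x + z ≠ 0) :
    (fderiv 𝕜 squareMove (x, y, z)).det = y / (x + z) ∧
      y / (x + z) = (squareMove (x, y, z)).1 * (squareMove (x, y, z)).2.1 *
        (squareMove (x, y, z)).2.2 / (x * y * z) :=
  ⟨det_fderiv_squareMove y hxz,
    eq_div_of_mul_eq (mul_ne_zero (mul_ne_zero hx hy) hz) (prod_squareMove x y z).symm⟩

end SquareMove

/-- The square-move substitution
`(β_j, β_{j+1}, β_{j+2}) = (yz/(x+z), x+z, xy/(x+z))` has Jacobian determinant
`y/(x+z) = +F₁·F₂·F₃/(x·y·z)` on the positive octant, so the two BCFW reference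
charts related by it have the same orientation. -/
theorem jacobian_case_iv (x y z : ℝ) (hx : 0 < x) (hy : 0 < y) (hz : 0 < z) :
    (fderiv ℝ (fun p : ℝ × ℝ × ℝ =>
        (p.2.1 * p.2.2 / (p.1 + p.2.2), p.1 + p.2.2, p.1 * p.2.1 / (p.1 + p.2.2)))
      (x, y, z)).det = y / (x + z) ∧
      y / (x + z) =
        (y * z / (x + z)) * (x + z) * (x * y / (x + z)) / (x * y * z) :=
  jacobian_case_iv_general hx.ne' hy.ne' hz.ne' (add_pos hx hz).ne'
end

section
/- Let U = {(x, y, z, w) ∈ ℝ⁴ : x > 0, y > 0, z > 0, w > 0} and define F : U → ℝ⁴ by F(x, y, z, w) = (x·y·z·w/(x + w), x + w, x·y/(x + w), x·z/(x + w)). Then for every (x, y, z, w) ∈ U, the Jacobian determinant of F at (x, y, z, w) equals −x²·y·z/(x + w)² = −F₁·F₂·F₃·F₄/(x·y·z·w). Consequently the change of variables (α_j, α_{j+1}, α_{j+2}, α_{j+3}) ↦ (β_j, β_{j+1}, β_{j+2}, β_{j+3}) = (α_j α_{j+1} α_{j+2} α_{j+3}/(α_j + α_{j+3}), α_j + α_{j+3},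 α_j α_{j+1}/(α_j + α_{j+3}), α_j α_{j+2}/(α_j + α_{j+3})) satisfies dlog β_{j+3} ∧ dlog β_{j+2} ∧ dlog β_{j+1} ∧ dlog β_j = − dlog α_{j+3} ∧ dlog α_{j+2} ∧ dlog α_{j+1} ∧ dlog α_j, so the two BCFW reference charts related by this substitution are oppositely oriented. -/
/-!
The substitution is monomial in `x, y, z, w` and `s = x + w`, so its Jacobian is easiest to read off
in logarithmic coordinates. With `u = x / s` and `v = w / s` we have `dlog s = u dlog x + v dlog w`,
hence each `dlog Fᵢ` is a combination of `dlog x, dlog y, dlog z, dlog w` with coefficients affine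
in `u` and `v`. The matrix of these coefficients has determinant `-(u + v) = -1`, and passing back
from logarithmic to ordinary differentials multiplies it by `F₁ F₂ F₃ F₄ / (x y z w)`.
-/

section LogarithmicDerivative

variable {𝕜 E : Type*} [NontriviallyNormedField 𝕜] [NormedAddCommGroup E] [NormedSpace 𝕜 E]

/-- `HasDlogAt f φ a` says that `φ` is the logarithmic differential `df / f` of `f` at `a`. It is
encoded as `df = f a • φ`, which avoids dividing by `f a` but does not determine `φ` if
`f a = 0`. -/
def HasDlogAt (f : E → 𝕜) (φ : E →L[𝕜] 𝕜) (a : E) : Prop :=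
  HasFDerivAt f (f a • φ) a

namespace HasDlogAt

variable {f g : E → 𝕜} {φ γ : E →L[𝕜] 𝕜} {a : E}

theorem congr_dlog (hf : HasDlogAt f φ a) (h : φ = γ) : HasDlogAt f γ a :=
  h ▸ hf

theorem mul (hf : HasDlogAt f φ a) (hg : HasDlogAt g γ a) :
    HasDlogAt (fun p => f p * g p) (φ + γ) a := by
  refine (HasFDerivAt.fun_mul hf hg).congr_fderiv ?_
  module

theorem inv (hf : HasDlogAt f φ a) (ha : f a ≠ 0) :
    HasDlogAt (fun p => (f p)⁻¹) (-φ) a := by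
  refine ((hasDerivAt_inv ha).comp_hasFDerivAt a hf).congr_fderiv ?_
  match_scalars
  field_simp

theorem div (hf : HasDlogAt f φ a) (hg : HasDlogAt g γ a) (ha : g a ≠ 0) :
    HasDlogAt (fun p => f p / g p) (φ - γ) a := by
  simpa only [div_eq_mul_inv, sub_eq_add_neg] using hf.mul (hg.inv ha)

theorem add (hf : HasDlogAt f φ a) (hg : HasDlogAt g γ a) (ha : f a + g a ≠ 0) :
    HasDlogAt (fun p => f p + g p)
      ((f a / (f a + g a)) • φ + (g a / (f a + g a)) • γ) a := by
  refine (HasFDerivAt.fun_add hf hg).congr_fderiv ?_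
  match_scalars <;> field_simp

end HasDlogAt

end LogarithmicDerivative

section JacobianDeterminant

variable {𝕜 ι : Type*} [NontriviallyNormedField 𝕜]

/-- The logarithmic differential `dlog pⱼ` of the `j`-th coordinate function, taken at `a`; it is
zero if `a j = 0`. -/
def dlogCoord (a : ι → 𝕜) (j : ι) : (ι → 𝕜) →L[𝕜] 𝕜 :=
  (a j)⁻¹ • ContinuousLinearMap.proj j

variable [Fintype ι]

theorem hasDlogAt_coord {a : ι → 𝕜} {j : ι} (ha : a j ≠ 0) :
    HasDlogAt (fun p : ι → 𝕜 => p j) (dlogCoord a j) a := by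
  refine (hasFDerivAt_apply j a).congr_fderiv ?_
  rw [dlogCoord, smul_inv_smul₀ ha]

theorem det_fderiv_of_hasDlogAt [DecidableEq ι] {F : (ι → 𝕜) → ι → 𝕜} {a : ι → 𝕜}
    {L : Matrix ι ι 𝕜}
    (hF : ∀ i, HasDlogAt (fun p => F p i) (∑ j, L i j • dlogCoord a j) a) :
    (fderiv 𝕜 F a).det = (∏ i, F a i) / (∏ j, a j) * L.det := by
  have jacobian : LinearMap.toMatrix' (fderiv 𝕜 F a : (ι → 𝕜) →ₗ[𝕜] ι → 𝕜) =
      Matrix.diagonal (F a) * L * Matrix.diagonal a⁻¹ := by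
    rw [(hasFDerivAt_pi.2 hF).fderiv]
    ext i j
    simp [LinearMap.toMatrix'_apply, dlogCoord, Pi.single_apply, mul_assoc]
  rw [ContinuousLinearMap.det, ← LinearMap.det_toMatrix', jacobian, Matrix.det_mul, Matrix.det_mul,
    Matrix.det_diagonal, Matrix.det_diagonal]
  simp only [Pi.inv_apply, Finset.prod_inv_distrib]
  ring

theorem det_fderiv_conj {E F : Type*} [NormedAddCommGroup E] [NormedSpace 𝕜 E]
    [NormedAddCommGroup F] [NormedSpace 𝕜 F] (e : E ≃L[𝕜] F) (f : F → F) (a : E) :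
    (fderiv 𝕜 (e.symm ∘ f ∘ e) a).det = (fderiv 𝕜 f (e a)).det := by
  rw [e.symm.comp_fderiv, e.comp_right_fderiv]
  exact LinearMap.det_conj (fderiv 𝕜 f (e a) : F →ₗ[𝕜] F) e.symm.toLinearEquiv

end JacobianDeterminant

section ChartChange

/-- The identification of the iterated product of four copies of `R` with `R⁴`, used to express
determinants of endomorphisms of the product by `4 × 4` matrices. -/
def prodEquivFinFour (R : Type*) [Semiring R] [TopologicalSpace R] :
    (R × R × R × R) ≃L[R] (Fin 4 → R) where
  toFun p := ![p.1, p.2.1, p.2.2.1, p.2.2.2]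
  invFun v := (v 0, v 1, v 2, v 3)
  map_add' p q := by simp
  map_smul' c p := by simp
  left_inv p := rfl
  right_inv v := by ext i; fin_cases i <;> rfl
  continuous_toFun := by fun_prop
  continuous_invFun := by fun_prop

/-- The change of variables `α ↦ β` between the two BCFW reference charts, with the indices
`j, …, j + 3` of the paper renumbered `0, …, 3`. -/
def chartChange {K : Type*} [Field K] (α : Fin 4 → K) : Fin 4 → K :=
  ![α 0 * α 1 * α 2 * α 3 / (α 0 + α 3), α 0 + α 3,
    α 0 * α 1 / (α 0 + α 3), α 0 * α 2 / (α 0 + α 3)]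

/-- The coefficients of `dlog βᵢ` in terms of the `dlog αⱼ`, where `u = α₀ / (α₀ + α₃)` and
`v = α₃ / (α₀ + α₃)`. -/
def chartChangeDlogMatrix {R : Type*} [Ring R] (u v : R) : Matrix (Fin 4) (Fin 4) R :=
  !![1 - u, 1, 1, 1 - v;
     u, 0, 0, v;
     1 - u, 1, 0, -v;
     1 - u, 0, 1, -v]

theorem det_chartChangeDlogMatrix {R : Type*} [CommRing R] (u v : R) :
    (chartChangeDlogMatrix u v).det = -(u + v) := by
  calc
    _ = -(u * !![1, 1, 1 - v; 1, 0, -v; 0, 1, -v].det) +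
        v * !![1 - u, 1, 1; 1 - u, 1, 0; 1 - u, 0, 1].det := by
      rw [Matrix.det_succ_row _ 1, Fin.sum_univ_four]
      simp [chartChangeDlogMatrix, Matrix.submatrix, Fin.succAbove, Matrix.det_fin_three,
        Even.neg_one_pow (show Even 4 by decide)]
    _ = -(u * (1 + v)) + v * (u - 1) := by
      simp only [Matrix.det_fin_three, Matrix.of_apply, Matrix.cons_val]
      ring
    _ = -(u + v) := by ring

variable {𝕜 : Type*} [NontriviallyNormedField 𝕜]

theorem hasDlogAt_chartChange {α : Fin 4 → 𝕜} (hα : ∀ j, α j ≠ 0) (hs : α 0 + α 3 ≠ 0)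
    (i : Fin 4) :
    HasDlogAt (fun p => chartChange p i)
      (∑ j, chartChangeDlogMatrix (α 0 / (α 0 + α 3)) (α 3 / (α 0 + α 3)) i j • dlogCoord α j)
      α := by
  have dlog_coord (j : Fin 4) := hasDlogAt_coord (hα j)
  have dlog_sum := (dlog_coord 0).add (dlog_coord 3) hs
  have dlog_prod := (((dlog_coord 0).mul (dlog_coord 1)).mul (dlog_coord 2)).mul (dlog_coord 3)
  refine match i with
    | 0 => (dlog_prod.div dlog_sum hs).congr_dlog ?_
    | 1 => dlog_sum.congr_dlog ?_
    | 2 => (((dlog_coord 0).mul (dlog_coord 1)).div dlog_sum hs).congr_dlog ?_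
    | 3 => (((dlog_coord 0).mul (dlog_coord 2)).div dlog_sum hs).congr_dlog ?_
  all_goals
    simp only [Fin.sum_univ_four, chartChangeDlogMatrix, Matrix.of_apply, Matrix.cons_val]
    module

theorem det_fderiv_chartChange {α : Fin 4 → 𝕜} (hα : ∀ j, α j ≠ 0) (hs : α 0 + α 3 ≠ 0) :
    (fderiv 𝕜 chartChange α).det = -(∏ i, chartChange α i) / ∏ j, α j := by
  rw [det_fderiv_of_hasDlogAt (hasDlogAt_chartChange hα hs), det_chartChangeDlogMatrix, ← add_div,
    div_self hs]
  ring

theorem jacobian_case_vi_general {x y z w : 𝕜} (hx : x ≠ 0) (hy : y ≠ 0) (hz : z ≠ 0)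
    (hw : w ≠ 0) (hs : x + w ≠ 0) :
    (fderiv 𝕜 (fun p : 𝕜 × 𝕜 × 𝕜 × 𝕜 =>
        (p.1 * p.2.1 * p.2.2.1 * p.2.2.2 / (p.1 + p.2.2.2), p.1 + p.2.2.2,
          p.1 * p.2.1 / (p.1 + p.2.2.2), p.1 * p.2.2.1 / (p.1 + p.2.2.2)))
      (x, y, z, w)).det = -(x ^ 2 * y * z / (x + w) ^ 2) ∧
      -(x ^ 2 * y * z / (x + w) ^ 2) =
        -((x * y * z * w / (x + w)) * (x + w) * (x * y / (x + w)) *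
            (x * z / (x + w))) / (x * y * z * w) := by
  have closed_form : -(x ^ 2 * y * z / (x + w) ^ 2) =
      -((x * y * z * w / (x + w)) * (x + w) * (x * y / (x + w)) *
          (x * z / (x + w))) / (x * y * z * w) := by
    field_simp
  have coord_ne_zero (j : Fin 4) : prodEquivFinFour 𝕜 (x, y, z, w) j ≠ 0 := by
    fin_cases j <;> assumption
  refine ⟨?_, closed_form⟩
  calc
    _ = (fderiv 𝕜 chartChange (prodEquivFinFour 𝕜 (x, y, z, w))).det :=
      det_fderiv_conj (prodEquivFinFour 𝕜) chartChange (x, y, z, w)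
    _ = -(∏ i, chartChange (prodEquivFinFour 𝕜 (x, y, z, w)) i) /
        ∏ j, prodEquivFinFour 𝕜 (x, y, z, w) j := det_fderiv_chartChange coord_ne_zero hs
    _ = -(x ^ 2 * y * z / (x + w) ^ 2) := by
      rw [Fin.prod_univ_four, Fin.prod_univ_four]
      exact closed_form.symm

end ChartChange

/-- The substitution
`(β_j, β_{j+1}, β_{j+2}, β_{j+3}) = (xyzw/(x+w), x+w, xy/(x+w), xz/(x+w))` has
Jacobian determinant `-x²yz/(x+w)² = -F₁·F₂·F₃·F₄/(x·y·z·w)` on the positive orthant,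
so the two BCFW reference charts related by it are oppositely oriented. -/
theorem jacobian_case_vi (x y z w : ℝ) (hx : 0 < x) (hy : 0 < y) (hz : 0 < z)
    (hw : 0 < w) :
    (fderiv ℝ (fun p : ℝ × ℝ × ℝ × ℝ =>
        (p.1 * p.2.1 * p.2.2.1 * p.2.2.2 / (p.1 + p.2.2.2), p.1 + p.2.2.2,
          p.1 * p.2.1 / (p.1 + p.2.2.2), p.1 * p.2.2.1 / (p.1 + p.2.2.2)))
      (x, y, z, w)).det = -(x ^ 2 * y * z / (x + w) ^ 2) ∧
      -(x ^ 2 * y * z / (x + w) ^ 2) =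
        -((x * y * z * w / (x + w)) * (x + w) * (x * y / (x + w)) *
            (x * z / (x + w))) / (x * y * z * w) :=
  jacobian_case_vi_general hx.ne' hy.ne' hz.ne' hw.ne' (add_pos hx hw).ne'
end
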